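/- Let A := {a ∈ C*_r(G) : j(a)(γ) = 0 for all γ ∈ G ∖ Ii}. For y ∈ G⁽⁰⁾ let P_{Ii y} be the orthogonal projection of ℓ²(Gy) onto ℓ²(Ii y) and define Φ_y(a) := P_{Ii y} λ_y(a) P_{Ii y}. Then for every b ∈ A, sup_{y ∈ G⁽⁰⁾} ‖Φ_y(b)‖ = ‖b‖; that is, the map b ↦ ⊕_{y ∈ G⁽⁰⁾} Φ_y(b) is isometric on A. -/

import Mathlib

/-- A locally compact Hausdorff étale groupoid, modelled as a type `G` with a
partially defined multiplication (encoded by a total function, meaningful on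
composable pairs), inversion, and source and range maps into the unit space. -/
structure EtaleGroupoid (G : Type*) [TopologicalSpace G] where
  src : G → G
  rng : G → G
  mul : G → G → G
  inv : G → G
  src_src : ∀ γ, src (src γ) = src γ
  rng_src : ∀ γ, rng (src γ) = src γ
  src_rng : ∀ γ, src (rng γ) = rng γ
  rng_rng : ∀ γ, rng (rng γ) = rng γ
  mul_assoc' : ∀ a b c, src a = rng b → src b = rng c →
      mul (mul a b) c = mul a (mul b c)
  src_mul : ∀ a b, src a = rng b → src (mul a b) = src b
  rng_mul : ∀ a b, src a = rng b → rng (mul a b) = rng a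
  mul_src_self : ∀ a, mul a (src a) = a
  rng_self_mul : ∀ a, mul (rng a) a = a
  src_inv : ∀ a, src (inv a) = rng a
  rng_inv : ∀ a, rng (inv a) = src a
  inv_mul_self : ∀ a, mul (inv a) a = src a
  mul_inv_self : ∀ a, mul a (inv a) = rng a
  continuous_src : Continuous src
  continuous_rng : Continuous rng
  continuous_inv : Continuous inv
  continuous_mul : Continuous fun p : {p : G × G // src p.1 = rng p.2} => mul p.1.1 p.1.2
  isOpen_unitSpace : IsOpen {x | src x = x}
  etale : ∀ γ, ∃ U : Set G, IsOpen U ∧ γ ∈ U ∧ Set.InjOn src U ∧ IsOpen (src '' U)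

namespace EtaleGroupoid

variable {G : Type*} [TopologicalSpace G] (E : EtaleGroupoid G)

/-- The unit space `G⁽⁰⁾`. -/
def unitSpace : Set G := {x | E.src x = x}

/-- `Gx = s⁻¹(x)`. -/
def Gx (x : G) : Set G := {γ | E.src γ = x}

/-- `xG = r⁻¹(x)`. -/
def xG (x : G) : Set G := {γ | E.rng γ = x}

/-- The isotropy `Iso(G) = ⋃ₓ (xG ∩ Gx)`. -/
def Iso : Set G := {γ | E.src γ = E.rng γ}

/-- `Ii = Iso(G)°`, the interior of the isotropy. -/
def Ii : Set G := interior E.Iso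

/-- `Iicl`, the closure of `Ii` in `G`. -/
def Iicl : Set G := closure E.Ii

/-- `Ii` is abelian: elements of `Ii` with the same source commute. -/
def IsAbelianIi : Prop :=
  ∀ a ∈ E.Ii, ∀ b ∈ E.Ii, E.src a = E.src b → E.mul a b = E.mul b a

/-- An open bisection: an open set on which both `src` and `rng` are injective. -/
def IsOpenBisection (B : Set G) : Prop :=
  IsOpen B ∧ Set.InjOn E.src B ∧ Set.InjOn E.rng B

/-- The set product `CD = {γδ : γ ∈ C, δ ∈ D, s(γ) = r(δ)}`. -/
def setMul (C D : Set G) : Set G :=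
  {g | ∃ c ∈ C, ∃ d ∈ D, E.src c = E.rng d ∧ g = E.mul c d}

/-- Natural-number set powers, with the convention `C⁰ = s(C)`. -/
def npowSet (C : Set G) : ℕ → Set G
  | 0 => E.src '' C
  | 1 => C
  | n + 2 => E.setMul (npowSet C (n + 1)) C

/-- Integer set powers: `C^(-m) = (C⁻¹)^m`. -/
def zpowSet (C : Set G) (m : ℤ) : Set G :=
  if 0 ≤ m then E.npowSet C m.toNat else E.npowSet (E.inv '' C) (-m).toNat

/-- Natural-number powers of an element, with `γ⁰ = s(γ)`. -/
def npow (γ : G) : ℕ → G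
  | 0 => E.src γ
  | n + 1 => E.mul (npow γ n) γ

/-- Integer powers of an element. -/
def zpow (γ : G) (m : ℤ) : G :=
  if 0 ≤ m then E.npow γ m.toNat else E.npow (E.inv γ) (-m).toNat

/-- The product of the sets `F i` over a list `l` of indices, multiplied on the
right by the set `T`. -/
def listSetProd {ι : Type*} (l : List ι) (F : ι → Set G) (T : Set G) : Set G :=
  l.foldr (fun i P => E.setMul (F i) P) T

/-- The product of the elements `f i` over a list `l` of indices, multiplied on the
right by `x`. -/
def listProd {ι : Type*} (l : List ι) (f : ι → G) (x : G) : G :=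
  l.foldr (fun i p => E.mul (f i) p) x

/-- `H` is a subgroup of the isotropy group `Iso(G)x = xG ∩ Gx` at the unit `x`. -/
def IsSubgroupAt (x : G) (H : Set G) : Prop :=
  (∀ a ∈ H, E.src a = x ∧ E.rng a = x) ∧ x ∈ H ∧
    (∀ a ∈ H, ∀ b ∈ H, E.mul a b ∈ H) ∧ ∀ a ∈ H, E.inv a ∈ H

/-- The subgroup of `Iso(G)x` generated by `gens`. -/
def subgroupClosureAt (x : G) (gens : Set G) : Set G :=
  ⋂₀ {H : Set G | E.IsSubgroupAt x H ∧ gens ⊆ H}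

/-- `q` restricts to a group homomorphism from the subgroup `H` of `Iso(G)x`
into the group `T` (a subgroup of the isotropy group at `y`). -/
def IsGroupHomOn (x y : G) (H : Set G) (T : Set G) (q : G → G) : Prop :=
  (∀ a ∈ H, q a ∈ T) ∧ q x = y ∧
    ∀ a ∈ H, ∀ b ∈ H, q (E.mul a b) = E.mul (q a) (q b)

end EtaleGroupoid

namespace EtaleGroupoid

section Algebra

variable {G : Type*} [TopologicalSpace G] (E : EtaleGroupoid G)

theorem inv_inv (a : G) : E.inv (E.inv a) = a := by
  have h1 : E.src (E.inv (E.inv a)) = E.src a := by rw [E.src_inv, E.rng_inv]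
  calc E.inv (E.inv a) = E.mul (E.inv (E.inv a)) (E.src (E.inv (E.inv a))) :=
        (E.mul_src_self _).symm
    _ = E.mul (E.inv (E.inv a)) (E.mul (E.inv a) a) := by rw [h1, E.inv_mul_self]
    _ = E.mul (E.mul (E.inv (E.inv a)) (E.inv a)) a :=
        (E.mul_assoc' _ _ _ (E.src_inv _) (E.src_inv _)).symm
    _ = a := by rw [E.inv_mul_self, E.src_inv, E.rng_self_mul]

theorem mul_mul_inv_cancel {a b : G} (h : E.src a = E.rng b) :
    E.mul (E.mul a b) (E.inv b) = a := by
  rw [E.mul_assoc' _ _ _ h (E.rng_inv b).symm, E.mul_inv_self, ← h, E.mul_src_self]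

theorem mul_inv_mul_cancel {a b : G} (h : E.src a = E.src b) :
    E.mul (E.mul a (E.inv b)) b = a := by
  rw [E.mul_assoc' _ _ _ (h.trans (E.rng_inv b).symm) (E.src_inv b), E.inv_mul_self, ← h,
    E.mul_src_self]

theorem src_mul_inv {a b : G} (h : E.src a = E.src b) :
    E.src (E.mul a (E.inv b)) = E.rng b := by
  rw [E.src_mul _ _ (h.trans (E.rng_inv b).symm), E.src_inv]

theorem rng_mul_inv {a b : G} (h : E.src a = E.src b) :
    E.rng (E.mul a (E.inv b)) = E.rng a :=
  E.rng_mul _ _ (h.trans (E.rng_inv b).symm)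

/-- `g = ab⁻¹` as soon as `gb = a`. -/
theorem mul_inv_eq_of_mul_eq {a b g : G} (h : E.src g = E.rng b) (hg : E.mul g b = a) :
    E.mul a (E.inv b) = g := by
  rw [← hg, E.mul_mul_inv_cancel h]

/-- `(ac)(bc)⁻¹ = ab⁻¹`. -/
theorem mul_inv_mul_right {a b c : G} (ha : E.src a = E.rng c) (hb : E.src b = E.rng c) :
    E.mul (E.mul a c) (E.inv (E.mul b c)) = E.mul a (E.inv b) := by
  have hab : E.src a = E.src b := ha.trans hb.symm
  apply E.mul_inv_eq_of_mul_eq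
  · rw [E.src_mul_inv hab, E.rng_mul _ _ hb]
  · rw [← E.mul_assoc' _ _ _ (E.src_mul_inv hab) hb, E.mul_inv_mul_cancel hab]

/-- `(ab⁻¹)⁻¹ = ba⁻¹`. -/
theorem inv_mul_inv {a b : G} (h : E.src a = E.src b) :
    E.inv (E.mul a (E.inv b)) = E.mul b (E.inv a) := by
  have key := E.mul_inv_eq_of_mul_eq (a := E.rng b) (b := E.mul a (E.inv b))
    (g := E.mul b (E.inv a)) (by rw [E.src_mul_inv h.symm, E.rng_mul_inv h]) (by
      have h2 : E.src b = E.rng (E.inv b) := (E.rng_inv b).symm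
      rw [← E.mul_assoc' _ _ _ (E.src_mul_inv h.symm) (h.trans h2), E.mul_inv_mul_cancel h.symm,
        E.mul_inv_self])
  rw [← key]
  have h3 : E.rng b = E.rng (E.inv (E.mul a (E.inv b))) := by
    rw [E.rng_inv, E.src_mul_inv h]
  rw [h3, E.rng_self_mul]

theorem src_mem_unitSpace (γ : G) : E.src γ ∈ E.unitSpace := E.src_src γ

theorem rng_mem_unitSpace (γ : G) : E.rng γ ∈ E.unitSpace := E.src_rng γ

theorem unitSpace_subset_Ii : E.unitSpace ⊆ E.Ii := by
  refine interior_maximal (fun x hx => ?_) E.isOpen_unitSpace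
  have hx' : E.src x = x := hx
  change E.src x = E.rng x
  rw [← hx', E.src_src, E.rng_src]

theorem Ii_subset_Iso : E.Ii ⊆ E.Iso := interior_subset

theorem inv_mem_Ii {γ : G} (h : γ ∈ E.Ii) : E.inv γ ∈ E.Ii := by
  have hsub : E.inv ⁻¹' E.Ii ⊆ E.Iso := fun g hg => by
    have hg' : E.src (E.inv g) = E.rng (E.inv g) := E.Ii_subset_Iso hg
    rw [E.src_inv, E.rng_inv] at hg'
    exact hg'.symm
  refine interior_maximal hsub (isOpen_interior.preimage E.continuous_inv) ?_
  change E.inv (E.inv γ) ∈ E.Ii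
  rwa [E.inv_inv]

/-- Right translation by `η`, a bijection from `G r(η)` onto `G s(η)`. -/
def rightTranslation {x y : G} (η : G) (hx : E.rng η = x) (hy : E.src η = y) :
    ↥(E.Gx x) ≃ ↥(E.Gx y) where
  toFun β := ⟨E.mul β η, show E.src _ = _ by
    rw [E.src_mul _ _ ((show E.src (β : G) = x from β.2).trans hx.symm), hy]⟩
  invFun γ := ⟨E.mul γ (E.inv η), show E.src _ = _ by
    rw [E.src_mul_inv ((show E.src (γ : G) = y from γ.2).trans hy.symm), hx]⟩
  left_inv β := Subtype.ext
    (E.mul_mul_inv_cancel ((show E.src (β : G) = x from β.2).trans hx.symm))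
  right_inv γ := Subtype.ext
    (E.mul_inv_mul_cancel ((show E.src (γ : G) = y from γ.2).trans hy.symm))

end Algebra

end EtaleGroupoid

section LpTwo

variable {ι κ : Type*}

theorem lp_two_hasSum_norm_sq (f : lp (fun _ : ι => ℂ) 2) :
    HasSum (fun i => ‖f i‖ ^ 2) (‖f‖ ^ 2) := by
  simpa using lp.hasSum_norm (p := 2) (by norm_num) f

/-- Expansion of a bounded operator on `ℓ²` in its matrix coefficients. -/
theorem lp_two_hasSum_apply [DecidableEq ι]
    (T : lp (fun _ : ι => ℂ) 2 →L[ℂ] lp (fun _ : κ => ℂ) 2)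
    (f : lp (fun _ : ι => ℂ) 2) (k : κ) :
    HasSum (fun i => f i * T (lp.single 2 i 1) k) (T f k) := by
  have h := ((lp.evalCLM ℂ (fun _ : κ => ℂ) 2 k).comp T).hasSum
    (lp.hasSum_single (p := 2) (by norm_num) f)
  have hterm : ∀ i, f i * T (lp.single 2 i 1) k =
      (lp.evalCLM ℂ (fun _ : κ => ℂ) 2 k).comp T (lp.single 2 i (f i)) := fun i => by
    have hi : lp.single (E := fun _ : ι => ℂ) 2 i (f i) = f i • lp.single 2 i (1 : ℂ) := by
      rw [← lp.single_smul, smul_eq_mul, mul_one]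
    rw [hi, map_smul]
    rfl
  simp only [hterm]
  exact h

open Classical in
/-- A blockwise `ℓ²` estimate over the classes of an equivalence relation gives a global one. -/
theorem lp_two_norm_le_of_forall_class (s : Setoid ι) (f g : lp (fun _ : ι => ℂ) 2) {M : ℝ}
    (hM : 0 ≤ M)
    (h : ∀ i, ∑' k, (if s.r k i then ‖g k‖ ^ 2 else 0) ≤
      M ^ 2 * ∑' k, (if s.r k i then ‖f k‖ ^ 2 else 0)) :
    ‖g‖ ≤ M * ‖f‖ := by
  let q : ι → Quotient s := Quotient.mk s
  have key : ∀ u : lp (fun _ : ι => ℂ) 2,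
      HasSum (fun c : Quotient s => ∑' k, if q k = c then ‖u k‖ ^ 2 else 0) (‖u‖ ^ 2) := by
    intro u
    have h1 := (Equiv.sigmaFiberEquiv q).hasSum_iff.mpr (lp_two_hasSum_norm_sq u)
    have h2 := h1.sigma (fun c => (h1.summable.sigma_factor c).hasSum)
    convert h2 using 2 with c
    exact ((tsum_subtype {k | q k = c} fun k => ‖u k‖ ^ 2).trans
      (tsum_congr fun k => by simp [Set.indicator_apply])).symm
  refine le_of_sq_le_sq ?_ (by positivity)
  rw [mul_pow]
  refine hasSum_le (fun c => ?_) (key g) ((key f).mul_left _)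
  obtain ⟨i, rfl⟩ := Quotient.exists_rep c
  simpa only [q, Quotient.eq] using h i

end LpTwo

theorem norm_starAlgHom_apply_le {R H : Type*} [NormedRing R] [StarRing R] [CStarRing R]
    [NormedAlgebra ℂ R] [StarModule ℂ R] [CompleteSpace R] [NormedAddCommGroup H]
    [InnerProductSpace ℂ H] [CompleteSpace H] (φ : R →⋆ₐ[ℂ] (H →L[ℂ] H)) (a : R) :
    ‖φ a‖ ≤ ‖a‖ := by
  let _ : CStarAlgebra R := {}
  exact NonUnitalStarAlgHom.norm_apply_le φ a

/-- A continuous compactly supported bump function at a point of an open set. -/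
theorem exists_continuous_hasCompactSupport_eq_one {X : Type*} [TopologicalSpace X] [T2Space X]
    [LocallyCompactSpace X] {U : Set X} (hU : IsOpen U) {x : X} (hx : x ∈ U) :
    ∃ g : X → ℂ, Continuous g ∧ HasCompactSupport g ∧ g x = 1 ∧ ∀ z, g z ≠ 0 → z ∈ U := by
  obtain ⟨f, hf1, hf0, hfc, -⟩ := exists_continuous_one_zero_of_isCompact
    (isCompact_singleton (x := x)) hU.isClosed_compl (by simpa using hx)
  refine ⟨fun z => (f z : ℂ), Complex.continuous_ofReal.comp f.continuous,
    hfc.comp_left (g := ((↑) : ℝ → ℂ)) Complex.ofReal_zero, ?_, fun z hz => ?_⟩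
  · simpa using hf1 (Set.mem_singleton x)
  · by_contra hzU
    exact hz (by simpa using hf0 hzU)

namespace EtaleGroupoid

section Reduced

variable {G : Type*} [TopologicalSpace G] (E : EtaleGroupoid G)

open Classical in
/-- The matrix coefficients of `λ_y(a)` are the values of `j(a)`. -/
theorem lam_single_apply
    {R : Type*} [NormedRing R] [StarRing R] [CStarRing R] [NormedAlgebra ℂ R]
    [StarModule ℂ R] [CompleteSpace R]
    (lam : ∀ y : ↥E.unitSpace,
      R →⋆ₐ[ℂ] (lp (fun _ : ↥(E.Gx ↑y) => ℂ) 2 →L[ℂ] lp (fun _ : ↥(E.Gx ↑y) => ℂ) 2))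
    (j : R → G → ℂ) (of : (G → ℂ) → R)
    (hdense : Dense {a : R | ∃ g : G → ℂ, Continuous g ∧ HasCompactSupport g ∧ a = of g})
    (hof : ∀ g : G → ℂ, Continuous g → HasCompactSupport g →
      ∀ (y : ↥E.unitSpace) (η γ : ↥(E.Gx ↑y)),
        (lam y (of g)) (lp.single 2 η 1) γ = g (E.mul ↑γ (E.inv ↑η)))
    (hj : ∀ (a : R) (y : ↥E.unitSpace) (γ : ↥(E.Gx ↑y)),
      j a ↑γ = (lam y a)
        (lp.single 2 (⟨(y : G), show E.src ↑y = ↑y from y.2⟩ : ↥(E.Gx ↑y)) 1) γ)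
    (a : R) (y : ↥E.unitSpace) (η γ : ↥(E.Gx ↑y)) :
    (lam y a) (lp.single 2 η 1) γ = j a (E.mul ↑γ (E.inv ↑η)) := by
  have hcont : ∀ (z : ↥E.unitSpace) (v : lp (fun _ : ↥(E.Gx ↑z) => ℂ) 2) (δ : ↥(E.Gx ↑z)),
      Continuous fun c : R => (lam z c) v δ := by
    intro z v δ
    have h1 : Continuous fun c : R => lam z c :=
      AddMonoidHomClass.continuous_of_bound (lam z) 1
        (by simpa only [one_mul] using norm_starAlgHom_apply_le (lam z))
    exact (lp.evalCLM ℂ (fun _ : ↥(E.Gx ↑z) => ℂ) 2 δ).continuous.comp (h1.clm_apply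
      continuous_const)
  have hsrc : E.src (γ : G) = E.src (η : G) :=
    (show E.src (γ : G) = y from γ.2).trans (show E.src (η : G) = y from η.2).symm
  let x : ↥E.unitSpace := ⟨E.rng η, E.rng_mem_unitSpace η⟩
  let δ : ↥(E.Gx ↑x) := ⟨E.mul γ (E.inv η), E.src_mul_inv hsrc⟩
  have hδ : ∀ c, j c (E.mul γ (E.inv η)) = _ := fun c => hj c x δ
  refine congrFun (Continuous.ext_on (f := fun c : R => (lam y c) (lp.single 2 η 1) γ)
    (g := fun c : R => j c (E.mul γ (E.inv η))) hdense (hcont _ _ _) ?_ ?_) a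
  · simp only [hδ]
    exact hcont _ _ _
  · rintro _ ⟨g, hgc, hgs, rfl⟩
    simp only [hδ]
    rw [hof g hgc hgs, hof g hgc hgs]
    congr 1
    refine (E.mul_inv_eq_of_mul_eq (a := δ) (b := x) (g := δ) ?_ ?_).symm
    · exact (E.src_mul_inv hsrc).trans (E.rng_rng _).symm
    · exact (congrArg (E.mul δ) (show E.src (δ : G) = x from δ.2).symm).trans (E.mul_src_self _)

open Classical in
/-- `j(a)` is continuous, being a uniform limit of continuous functions. -/
theorem continuous_of_lam_single_apply
    {R : Type*} [NormedRing R] [StarRing R] [CStarRing R] [NormedAlgebra ℂ R]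
    [StarModule ℂ R] [CompleteSpace R]
    (lam : ∀ y : ↥E.unitSpace,
      R →⋆ₐ[ℂ] (lp (fun _ : ↥(E.Gx ↑y) => ℂ) 2 →L[ℂ] lp (fun _ : ↥(E.Gx ↑y) => ℂ) 2))
    (j : R → G → ℂ) (of : (G → ℂ) → R)
    (hdense : Dense {a : R | ∃ g : G → ℂ, Continuous g ∧ HasCompactSupport g ∧ a = of g})
    (hof : ∀ g : G → ℂ, Continuous g → HasCompactSupport g → j (of g) = g)
    (hj : ∀ (a : R) (y : ↥E.unitSpace) (γ : ↥(E.Gx ↑y)),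
      j a ↑γ = (lam y a)
        (lp.single 2 (⟨(y : G), show E.src ↑y = ↑y from y.2⟩ : ↥(E.Gx ↑y)) 1) γ)
    (a : R) : Continuous (j a) := by
  have hbound : ∀ (c d : R) (γ : G), dist (j c γ) (j d γ) ≤ dist c d := by
    intro c d γ
    let y : ↥E.unitSpace := ⟨E.src γ, E.src_mem_unitSpace γ⟩
    let γ' : ↥(E.Gx ↑y) := ⟨γ, rfl⟩
    have hγ : ∀ e, j e γ = _ := fun e => hj e y γ'
    rw [hγ, hγ, dist_eq_norm, dist_eq_norm]
    set v : lp (fun _ : ↥(E.Gx ↑y) => ℂ) 2 :=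
      lp.single 2 (⟨(y : G), show E.src ↑y = ↑y from y.2⟩ : ↥(E.Gx ↑y)) 1 with hv
    have hv1 : ‖v‖ = 1 := by rw [hv, lp.norm_single (by norm_num), norm_one]
    calc ‖(lam y c) v γ' - (lam y d) v γ'‖ = ‖(lam y (c - d)) v γ'‖ := by
          rw [map_sub]; rfl
      _ ≤ ‖(lam y (c - d)) v‖ := lp.norm_apply_le_norm (by norm_num) _ _
      _ ≤ ‖lam y (c - d)‖ * ‖v‖ := ContinuousLinearMap.le_opNorm _ _
      _ ≤ ‖c - d‖ := by rw [hv1, mul_one]; exact norm_starAlgHom_apply_le _ _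
  refine continuous_of_uniform_approx_of_continuous fun u hu => ?_
  obtain ⟨ε, hε, hεu⟩ := Metric.mem_uniformity_dist.mp hu
  obtain ⟨_, ⟨g, hgc, hgs, rfl⟩, hac⟩ := hdense.exists_dist_lt a hε
  refine ⟨g, hgc, fun γ => hεu ?_⟩
  have := hbound a (of g) γ
  rw [hof g hgc hgs] at this
  exact this.trans_lt hac

open Classical in
/-- `Ii` is closed under multiplication. The proof convolves two bump functions supported in
`Ii`: the resulting function is continuous, supported in the isotropy and nonzero at `γδ`. -/
theorem mul_mem_Ii [T2Space G] [LocallyCompactSpace G]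
    {R : Type*} [NormedRing R] [StarRing R] [NormedAlgebra ℂ R]
    (lam : ∀ y : ↥E.unitSpace,
      R →⋆ₐ[ℂ] (lp (fun _ : ↥(E.Gx ↑y) => ℂ) 2 →L[ℂ] lp (fun _ : ↥(E.Gx ↑y) => ℂ) 2))
    (j : R → G → ℂ) (of : (G → ℂ) → R)
    (hof : ∀ g : G → ℂ, Continuous g → HasCompactSupport g → j (of g) = g)
    (hj : ∀ (a : R) (y : ↥E.unitSpace) (γ : ↥(E.Gx ↑y)),
      j a ↑γ = (lam y a)
        (lp.single 2 (⟨(y : G), show E.src ↑y = ↑y from y.2⟩ : ↥(E.Gx ↑y)) 1) γ)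
    (hcoeff : ∀ (a : R) (y : ↥E.unitSpace) (η γ : ↥(E.Gx ↑y)),
      (lam y a) (lp.single 2 η 1) γ = j a (E.mul ↑γ (E.inv ↑η)))
    (hcont : ∀ a, Continuous (j a))
    {γ δ : G} (hγ : γ ∈ E.Ii) (hδ : δ ∈ E.Ii) (h : E.src γ = E.rng δ) :
    E.mul γ δ ∈ E.Ii := by
  obtain ⟨U, hU, hδU, hinj, -⟩ := E.etale δ
  obtain ⟨f, hfc, hfs, hf1, hf⟩ := exists_continuous_hasCompactSupport_eq_one
    (isOpen_interior (s := E.Iso)) hγ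
  obtain ⟨g, hgc, hgs, hg1, hg⟩ := exists_continuous_hasCompactSupport_eq_one
    ((isOpen_interior (s := E.Iso)).inter hU) ⟨hδ, hδU⟩
  have hconv : ∀ z : G, HasSum (fun β : ↥(E.Gx (E.src z)) => g β * f (E.mul z (E.inv β)))
      (j (of f * of g) z) := by
    intro z
    let y : ↥E.unitSpace := ⟨E.src z, E.src_mem_unitSpace z⟩
    let z' : ↥(E.Gx ↑y) := ⟨z, rfl⟩
    have hz : j (of f * of g) z = _ := hj (of f * of g) y z'
    rw [hz, map_mul, mul_apply_eq_comp]
    convert lp_two_hasSum_apply (lam y (of f)) _ z' using 2 with β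
    rw [← hj, hcoeff, hof f hfc hfs, hof g hgc hgs]
  have hopen : IsOpen {z | j (of f * of g) z ≠ 0} := isOpen_ne_fun (hcont _) continuous_const
  refine interior_maximal (fun z hz => ?_) hopen ?_
  · by_contra hzI
    refine hz ((hconv z).unique ?_)
    convert hasSum_zero with β
    by_contra hβ
    have hsrc : E.src z = E.src (β : G) := (show E.src (β : G) = E.src z from β.2).symm
    have h1 : E.src (β : G) = E.rng (β : G) :=
      E.Ii_subset_Iso (hg _ (left_ne_zero_of_mul hβ)).1
    have h2 : E.src (E.mul z (E.inv β)) = E.rng (E.mul z (E.inv β)) :=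
      E.Ii_subset_Iso (hf _ (right_ne_zero_of_mul hβ))
    rw [E.src_mul_inv hsrc, E.rng_mul_inv hsrc] at h2
    exact hzI (hsrc.trans (h1.trans h2))
  · have hsrc : E.src δ = E.src (E.mul γ δ) := (E.src_mul _ _ h).symm
    have h1 := (hconv (E.mul γ δ)).unique (hasSum_single ⟨δ, hsrc⟩ fun β hβ => ?_)
    · rw [Set.mem_ofPred_eq, h1]
      simp [hg1, E.mul_mul_inv_cancel h, hf1]
    · rw [mul_eq_zero]
      left
      by_contra hβ0
      refine hβ (Subtype.ext (hinj (hg _ hβ0).2 hδU ?_))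
      exact (show E.src (β : G) = _ from β.2).trans hsrc.symm

/-- The equivalence relation on `Gy` whose classes are the cosets `Ii r(η) η`. -/
def cosetSetoid (hmul : ∀ γ ∈ E.Ii, ∀ δ ∈ E.Ii, E.src γ = E.rng δ → E.mul γ δ ∈ E.Ii) (y : G) :
    Setoid ↥(E.Gx y) where
  r γ η := E.mul γ (E.inv η) ∈ E.Ii
  iseqv :=
    { refl := fun γ => by
        rw [E.mul_inv_self]
        exact E.unitSpace_subset_Ii (E.rng_mem_unitSpace _)
      symm := fun {γ η} h => by
        rw [← E.inv_mul_inv ((show E.src (γ : G) = y from γ.2).trans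
          (show E.src (η : G) = y from η.2).symm)]
        exact E.inv_mem_Ii h
      trans := fun {γ η ζ} h h' => by
        have hγ : E.src (γ : G) = y := γ.2
        have hη : E.src (η : G) = y := η.2
        have hζ : E.src (ζ : G) = y := ζ.2
        have hs : E.src (E.mul γ (E.inv η)) = E.rng (E.mul η (E.inv ζ)) := by
          rw [E.src_mul_inv (hγ.trans hη.symm), E.rng_mul_inv (hη.trans hζ.symm)]
        have := hmul _ h _ h' hs
        rwa [← E.mul_assoc' _ _ _ (E.src_mul_inv (hγ.trans hη.symm))
          (hη.trans (hζ.symm.trans (E.rng_inv _).symm)),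
          E.mul_inv_mul_cancel (hγ.trans hη.symm)] at this }

open Classical in
/-- Operators on the spaces `ℓ²(Gy)` given by a common kernel supported in `Ii` are block
diagonal, with blocks the compressions to the spaces `ℓ²(Ii x)`. -/
theorem norm_le_of_kernel_support
    (hmul : ∀ γ ∈ E.Ii, ∀ δ ∈ E.Ii, E.src γ = E.rng δ → E.mul γ δ ∈ E.Ii)
    (T P : ∀ y : ↥E.unitSpace,
      lp (fun _ : ↥(E.Gx ↑y) => ℂ) 2 →L[ℂ] lp (fun _ : ↥(E.Gx ↑y) => ℂ) 2)
    (k : G → ℂ) (hk : ∀ γ, γ ∉ E.Ii → k γ = 0)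
    (hT : ∀ (y : ↥E.unitSpace) (η γ : ↥(E.Gx ↑y)),
      T y (lp.single 2 η 1) γ = k (E.mul ↑γ (E.inv ↑η)))
    (hP1 : ∀ (y : ↥E.unitSpace) (f : lp (fun _ : ↥(E.Gx ↑y) => ℂ) 2) (β : ↥(E.Gx ↑y)),
      (↑β : G) ∈ E.Ii → P y f β = f β)
    (hP2 : ∀ (y : ↥E.unitSpace) (f : lp (fun _ : ↥(E.Gx ↑y) => ℂ) 2) (β : ↥(E.Gx ↑y)),
      (↑β : G) ∉ E.Ii → P y f β = 0)
    {M : ℝ} (hM : 0 ≤ M) (hbound : ∀ x, ‖(P x).comp ((T x).comp (P x))‖ ≤ M)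
    (y : ↥E.unitSpace) : ‖T y‖ ≤ M := by
  refine ContinuousLinearMap.opNorm_le_bound _ hM fun f => ?_
  refine lp_two_norm_le_of_forall_class (E.cosetSetoid hmul y) f (T y f) hM fun η => ?_
  let x : ↥E.unitSpace := ⟨E.rng η, E.rng_mem_unitSpace η⟩
  have hη : E.src (η : G) = y := η.2
  let τ : ↥(E.Gx ↑x) ≃ ↥(E.Gx ↑y) := E.rightTranslation η rfl hη
  have hsrc : ∀ β : ↥(E.Gx ↑x), E.src (β : G) = E.rng (η : G) := fun β => β.2
  have hτ : ∀ β, (E.cosetSetoid hmul y).r (τ β) η ↔ (β : G) ∈ E.Ii := fun β => by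
    change E.mul (E.mul β η) (E.inv η) ∈ E.Ii ↔ _
    rw [E.mul_mul_inv_cancel (hsrc β)]
  have hmem : Memℓp (fun β : ↥(E.Gx ↑x) => if (β : G) ∈ E.Ii then f (τ β) else 0) 2 := by
    refine memℓp_gen (Summable.of_nonneg_of_le (fun _ => by positivity) (fun β => ?_)
      ((lp_two_hasSum_norm_sq f).summable.comp_injective τ.injective))
    split_ifs <;> simp
  let u : lp (fun _ : ↥(E.Gx ↑x) => ℂ) 2 := ⟨_, hmem⟩
  have hu : ∀ β, u β = if (β : G) ∈ E.Ii then f (τ β) else 0 := fun _ => rfl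
  have hPu : P x u = u := by
    ext β
    by_cases hβ : (β : G) ∈ E.Ii
    · exact hP1 _ _ _ hβ
    · rw [hP2 _ _ _ hβ, hu, if_neg hβ]
  have hTu : ∀ β : ↥(E.Gx ↑x), (β : G) ∈ E.Ii → T x u β = T y f (τ β) := by
    intro β hβ
    have h1 := lp_two_hasSum_apply (T x) u β
    have h2 := τ.hasSum_iff.mpr (lp_two_hasSum_apply (T y) f (τ β))
    refine h1.unique ?_
    convert h2 using 2 with β'
    have hββ' : E.src (β : G) = E.src (β' : G) := (hsrc β).trans (hsrc β').symm
    have h3 : E.mul (τ β) (E.inv (τ β')) = E.mul β (E.inv β') :=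
      E.mul_inv_mul_right (hsrc β) (hsrc β')
    rw [Function.comp_apply, hT, hT, h3, hu]
    split_ifs with hβ'
    · rfl
    · rw [hk, mul_zero, mul_zero]
      intro hmem'
      refine hβ' ?_
      have h4 := hmul _ (E.inv_mem_Ii hmem') _ hβ (by rw [E.src_inv, E.rng_mul_inv hββ'])
      rwa [E.inv_mul_inv hββ', E.mul_inv_mul_cancel hββ'.symm] at h4
  have hsum : ∀ (g : lp (fun _ : ↥(E.Gx ↑y) => ℂ) 2) (w : lp (fun _ : ↥(E.Gx ↑x) => ℂ) 2),
      (∀ β, w β = if (β : G) ∈ E.Ii then g (τ β) else 0) →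
      ∑' γ, (if (E.cosetSetoid hmul y).r γ η then ‖g γ‖ ^ 2 else 0) = ‖w‖ ^ 2 := by
    intro g w hw
    rw [← τ.tsum_eq, ← (lp_two_hasSum_norm_sq w).tsum_eq]
    refine tsum_congr fun β => ?_
    rw [hw]
    simp only [hτ]
    split_ifs <;> simp
  rw [hsum f u hu, hsum (T y f) ((P x).comp ((T x).comp (P x)) u) fun β => ?_, ← mul_pow]
  · gcongr
    exact ContinuousLinearMap.le_of_opNorm_le _ (hbound x) u
  · rw [ContinuousLinearMap.comp_apply, ContinuousLinearMap.comp_apply, hPu]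
    split_ifs with hβ
    · rw [hP1 _ _ _ hβ, hTu _ hβ]
    · exact hP2 _ _ _ hβ

end Reduced

end EtaleGroupoid

/-- A map on `ℓ²` that shrinks all coordinates is a contraction. -/
theorem lp_two_opNorm_le_one {ι : Type*}
    (P : lp (fun _ : ι => ℂ) 2 →L[ℂ] lp (fun _ : ι => ℂ) 2)
    (h : ∀ f i, ‖P f i‖ ≤ ‖f i‖) : ‖P‖ ≤ 1 := by
  refine ContinuousLinearMap.opNorm_le_bound _ zero_le_one fun f => ?_
  rw [one_mul]
  refine le_of_sq_le_sq ?_ (norm_nonneg _)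
  refine hasSum_le (fun i => ?_) (lp_two_hasSum_norm_sq (P f)) (lp_two_hasSum_norm_sq f)
  gcongr
  exact h f i

open EtaleGroupoid in
open Classical in
/-- the map `b ↦ ⊕_y Φ_y(b)`, where `Φ_y(b) = P_{Ii y} λ_y(b) P_{Ii y}`,
is isometric on `A = {b : j(b) = 0 off Ii}`, i.e. `sup_y ‖Φ_y(b)‖ = ‖b‖` for `b ∈ A`.
The reduced C*-algebra `C*_r(G)` is axiomatised as in Statement 0: a C*-algebra `R`
with regular representations `lam y`, a dense copy `of` of `C_c(G)` acting by the
usual matrix coefficients, the reduced norm condition, and Renault's `j`-map.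
`P y` is the coordinate projection of `ℓ²(Gy)` onto `ℓ²(Ii y)`. -/
theorem stmt11 {G : Type*} [TopologicalSpace G] [T2Space G] [LocallyCompactSpace G]
    (E : EtaleGroupoid G) (hab : E.IsAbelianIi)
    (R : Type*) [NormedRing R] [StarRing R] [CStarRing R] [NormedAlgebra ℂ R]
    [StarModule ℂ R] [CompleteSpace R]
    (lam : ∀ y : ↥E.unitSpace,
      R →⋆ₐ[ℂ] (lp (fun _ : ↥(E.Gx ↑y) => ℂ) 2 →L[ℂ] lp (fun _ : ↥(E.Gx ↑y) => ℂ) 2))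
    (j : R → G → ℂ)
    (of : (G → ℂ) → R)
    (hdense : Dense {a : R | ∃ g : G → ℂ, Continuous g ∧ HasCompactSupport g ∧ a = of g})
    (hof : ∀ g : G → ℂ, Continuous g → HasCompactSupport g →
      ∀ (y : ↥E.unitSpace) (η γ : ↥(E.Gx ↑y)),
        (lam y (of g)) (lp.single 2 η 1) γ = g (E.mul ↑γ (E.inv ↑η)))
    (hnorm : ∀ a : R, ‖a‖ = ⨆ y : ↥E.unitSpace, ‖lam y a‖)
    (hj : ∀ (a : R) (y : ↥E.unitSpace) (γ : ↥(E.Gx ↑y)),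
      j a ↑γ = (lam y a)
        (lp.single 2 (⟨(y : G), show E.src ↑y = ↑y from y.2⟩ : ↥(E.Gx ↑y)) 1) γ)
    (P : ∀ y : ↥E.unitSpace,
      lp (fun _ : ↥(E.Gx ↑y) => ℂ) 2 →L[ℂ] lp (fun _ : ↥(E.Gx ↑y) => ℂ) 2)
    (hP1 : ∀ (y : ↥E.unitSpace) (f : lp (fun _ : ↥(E.Gx ↑y) => ℂ) 2) (β : ↥(E.Gx ↑y)),
      (↑β : G) ∈ E.Ii → P y f β = f β)
    (hP2 : ∀ (y : ↥E.unitSpace) (f : lp (fun _ : ↥(E.Gx ↑y) => ℂ) 2) (β : ↥(E.Gx ↑y)),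
      (↑β : G) ∉ E.Ii → P y f β = 0)
    (b : R) (hb : ∀ γ, γ ∉ E.Ii → j b γ = 0) :
    ⨆ y : ↥E.unitSpace, ‖(P y).comp ((lam y b).comp (P y))‖ = ‖b‖ := by
  have hcoeff := E.lam_single_apply lam j of hdense hof hj
  have hj_of : ∀ g : G → ℂ, Continuous g → HasCompactSupport g → j (of g) = g := by
    intro g hgc hgs
    funext γ
    let y : ↥E.unitSpace := ⟨E.src γ, E.src_mem_unitSpace γ⟩
    let γ' : ↥(E.Gx ↑y) := ⟨γ, rfl⟩
    have hγ : j (of g) γ = _ := hj (of g) y γ'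
    rw [hγ, hof g hgc hgs]
    congr 1
    exact E.mul_inv_eq_of_mul_eq (E.rng_src γ).symm (E.mul_src_self γ)
  have hcont := E.continuous_of_lam_single_apply lam j of hdense hj_of hj
  have hmul : ∀ γ ∈ E.Ii, ∀ δ ∈ E.Ii, E.src γ = E.rng δ → E.mul γ δ ∈ E.Ii :=
    fun γ hγ δ hδ h => E.mul_mem_Ii lam j of hj_of hj hcoeff hcont hγ hδ h
  have hP : ∀ y, ‖P y‖ ≤ 1 := fun y => lp_two_opNorm_le_one _ fun f β => by
    by_cases hβ : (β : G) ∈ E.Ii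
    · rw [hP1 _ _ _ hβ]
    · rw [hP2 _ _ _ hβ, norm_zero]
      exact norm_nonneg _
  have hle : ∀ y, ‖(P y).comp ((lam y b).comp (P y))‖ ≤ ‖b‖ := fun y =>
    calc ‖(P y).comp ((lam y b).comp (P y))‖ ≤ ‖P y‖ * (‖lam y b‖ * ‖P y‖) :=
          (ContinuousLinearMap.opNorm_comp_le _ _).trans
            (by gcongr; exact ContinuousLinearMap.opNorm_comp_le _ _)
      _ ≤ 1 * (‖b‖ * 1) := by
          gcongr
          · exact hP y
          · exact norm_starAlgHom_apply_le _ _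
          · exact hP y
      _ = ‖b‖ := by ring
  refine le_antisymm (Real.iSup_le hle (norm_nonneg _)) ?_
  have hM : 0 ≤ ⨆ y : ↥E.unitSpace, ‖(P y).comp ((lam y b).comp (P y))‖ :=
    Real.iSup_nonneg fun _ => norm_nonneg _
  rw [hnorm b]
  exact Real.iSup_le (E.norm_le_of_kernel_support hmul (fun y => lam y b) P (j b) hb (hcoeff b)
    hP1 hP2 hM (le_ciSup ⟨‖b‖, Set.forall_mem_range.mpr hle⟩)) hM
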